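/- Let I ⊆ ℝ be an open interval, p, q₀, r₀ : I → ℝ smooth, b₁, …, bₙ : I → ℝ smooth and nonvanishing, and υₖ : I → ℝ smooth (k = 1, …, n). Set σₖ = Σ_{j=1}^{k} bⱼ'/bⱼ and sₖ = b₁·b₂⋯bₖ. Define qₖ = q₀ + k·p' - 2p·σₖ, rₖ = r₀ + k·q₀' + ½k(k-1)p'' + υₖ·p' - σₖ·(q₀ + k·p') + (σₖ² - σₖ' + 2υₖ')·p, Tₖ y = p·y'' + qₖ·y' + rₖ·y, and also q̃ₖ = q₀ + k·p', r̃ₖ = r₀ + k·q₀' + ½k(k-1)p'' + υₖ·p' + 2υₖ'·p, T̃ₖ y = p·y'' + q̃ₖ·y' + r̃ₖ·y. Then for each k = 1, …, n and every smooth y : I → ℝ, Tₖ y = sₖ · T̃ₖ(y / sₖ) on I; that is, Tₖ = sₖ T̃ₖ sₖ⁻¹ as operators. -/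

import Mathlib

open Set

/-- Second-order operator `T = pD² + qD + r`. -/
noncomputable def secondOrderOp (p q r : ℝ → ℝ) (y : ℝ → ℝ) (z : ℝ) : ℝ :=
  p z * deriv (deriv y) z + q z * deriv y z + r z * y z

/-- `σ k = ∑_{j=1}^k bⱼ'/bⱼ`. -/
noncomputable def sigmaGauge (bf : ℕ → ℝ → ℝ) (k : ℕ) (z : ℝ) : ℝ :=
  ∑ j ∈ Finset.Icc 1 k, deriv (bf j) z / bf j z

/-- `s k = b₁ b₂ ⋯ bₖ`. -/
noncomputable def sGauge (bf : ℕ → ℝ → ℝ) (k : ℕ) (z : ℝ) : ℝ :=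
  ∏ j ∈ Finset.Icc 1 k, bf j z

/-- `qₖ = q₀ + k p' - 2 p σₖ`. -/
noncomputable def qCoeff (p q₀ : ℝ → ℝ) (bf : ℕ → ℝ → ℝ) (k : ℕ) (z : ℝ) : ℝ :=
  q₀ z + k * deriv p z - 2 * p z * sigmaGauge bf k z

/-- `rₖ = r₀ + k q₀' + ½k(k-1)p'' + υₖ p' - σₖ(q₀ + k p') + (σₖ² - σₖ' + 2υₖ')p`. -/
noncomputable def rCoeff (p q₀ r₀ : ℝ → ℝ) (bf : ℕ → ℝ → ℝ) (υ : ℕ → ℝ → ℝ)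
    (k : ℕ) (z : ℝ) : ℝ :=
  r₀ z + k * deriv q₀ z + (1 / 2 : ℝ) * k * (k - 1) * deriv (deriv p) z
    + υ k z * deriv p z - sigmaGauge bf k z * (q₀ z + k * deriv p z)
    + ((sigmaGauge bf k z) ^ 2 - deriv (sigmaGauge bf k) z + 2 * deriv (υ k) z) * p z

/-- `q̃ₖ = q₀ + k p'`. -/
noncomputable def qTilde (p q₀ : ℝ → ℝ) (k : ℕ) (z : ℝ) : ℝ :=
  q₀ z + k * deriv p z

/-- `r̃ₖ = r₀ + k q₀' + ½k(k-1)p'' + υₖ p' + 2 υₖ' p`. -/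
noncomputable def rTilde (p q₀ r₀ : ℝ → ℝ) (υ : ℕ → ℝ → ℝ) (k : ℕ) (z : ℝ) : ℝ :=
  r₀ z + k * deriv q₀ z + (1 / 2 : ℝ) * k * (k - 1) * deriv (deriv p) z
    + υ k z * deriv p z + 2 * deriv (υ k) z * p z

/-- The logarithmic derivative of `sₖ` is `σₖ`. -/
theorem hasDerivAt_sGauge {bf : ℕ → ℝ → ℝ} {k : ℕ} {z : ℝ}
    (hd : ∀ j ∈ Finset.Icc 1 k, DifferentiableAt ℝ (bf j) z)
    (h0 : ∀ j ∈ Finset.Icc 1 k, bf j z ≠ 0) :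
    HasDerivAt (sGauge bf k) (sigmaGauge bf k z * sGauge bf k z) z := by
  have h := HasDerivAt.fun_finsetProd fun j hj => (hd j hj).hasDerivAt
  refine h.congr_deriv ?_
  rw [sigmaGauge, sGauge, Finset.sum_mul]
  refine Finset.sum_congr rfl fun j hj => ?_
  rw [smul_eq_mul, ← Finset.mul_prod_erase _ _ hj]
  field_simp [h0 j hj]

theorem differentiableAt_sigmaGauge {bf : ℕ → ℝ → ℝ} {k : ℕ} {z : ℝ}
    (hd : ∀ j ∈ Finset.Icc 1 k, DifferentiableAt ℝ (bf j) z)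
    (hd' : ∀ j ∈ Finset.Icc 1 k, DifferentiableAt ℝ (deriv (bf j)) z)
    (h0 : ∀ j ∈ Finset.Icc 1 k, bf j z ≠ 0) :
    DifferentiableAt ℝ (sigmaGauge bf k) z :=
  DifferentiableAt.fun_sum fun j hj => (hd' j hj).fun_div (hd j hj) (h0 j hj)

/-- Dividing by a function with logarithmic derivative `l` turns `D` into `D - l`. -/
theorem hasDerivAt_div_of_logDeriv {y s l : ℝ → ℝ} {z : ℝ} (hy : DifferentiableAt ℝ y z)
    (hs : HasDerivAt s (l z * s z) z) (h0 : s z ≠ 0) :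
    HasDerivAt (fun x => y x / s x) ((deriv y z - l z * y z) / s z) z := by
  refine (hy.hasDerivAt.fun_div hs h0).congr_deriv ?_
  field_simp

/-- Conjugation of a second-order operator by a nonvanishing function `s` with `s' = l s`. -/
theorem mul_secondOrderOp_div {U : Set ℝ} (hU : IsOpen U) {s l y : ℝ → ℝ} (p q r : ℝ → ℝ)
    (hs : ∀ x ∈ U, HasDerivAt s (l x * s x) x) (h0 : ∀ x ∈ U, s x ≠ 0)
    (hl : DifferentiableOn ℝ l U) (hy : DifferentiableOn ℝ y U)
    (hy' : DifferentiableOn ℝ (deriv y) U) {z : ℝ} (hz : z ∈ U) :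
    s z * secondOrderOp p q r (fun x => y x / s x) z =
      secondOrderOp p (fun x => q x - 2 * p x * l x)
        (fun x => r x - l x * q x + (l x ^ 2 - deriv l x) * p x) y z := by
  have hzU := hU.mem_nhds hz
  have hyz := hy.differentiableAt hzU
  have hlz := hl.differentiableAt hzU
  have hyz' := hy'.differentiableAt hzU
  have first : ∀ x ∈ U, deriv (fun x => y x / s x) x = (deriv y x - l x * y x) / s x :=
    fun x hx => (hasDerivAt_div_of_logDeriv (hy.differentiableAt (hU.mem_nhds hx))
      (hs x hx) (h0 x hx)).deriv
  have hnum : HasDerivAt (fun x => deriv y x - l x * y x)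
      (deriv (deriv y) z - (deriv l z * y z + l z * deriv y z)) z :=
    hyz'.hasDerivAt.fun_sub (hlz.hasDerivAt.fun_mul hyz.hasDerivAt)
  have second : deriv (deriv fun x => y x / s x) z =
      (deriv (deriv y) z - (deriv l z * y z + l z * deriv y z)
        - l z * (deriv y z - l z * y z)) / s z := by
    rw [(Filter.eventuallyEq_of_mem hzU first).deriv_eq,
      (hasDerivAt_div_of_logDeriv hnum.differentiableAt (hs z hz) (h0 z hz)).deriv, hnum.deriv]
  have hsz := h0 z hz
  simp only [secondOrderOp, second, first z hz]
  field_simp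
  ring

/-- gauge transformation — `Tₖ = sₖ T̃ₖ sₖ⁻¹`, i.e.
`Tₖ y = sₖ · T̃ₖ (y / sₖ)` on the interval, for each `k = 1, …, n`. -/
theorem statement5 (n : ℕ) (a b : ℝ) (hab : a < b)
    (p q₀ r₀ : ℝ → ℝ) (bf υ : ℕ → ℝ → ℝ)
    (hp : ContDiffOn ℝ (⊤ : ℕ∞) p (Ioo a b)) (hq₀ : ContDiffOn ℝ (⊤ : ℕ∞) q₀ (Ioo a b))
    (hr₀ : ContDiffOn ℝ (⊤ : ℕ∞) r₀ (Ioo a b))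
    (hb : ∀ j ∈ Finset.Icc 1 n, ContDiffOn ℝ (⊤ : ℕ∞) (bf j) (Ioo a b))
    (hb0 : ∀ j ∈ Finset.Icc 1 n, ∀ z ∈ Ioo a b, bf j z ≠ 0)
    (hυ : ∀ k ∈ Finset.Icc 1 n, ContDiffOn ℝ (⊤ : ℕ∞) (υ k) (Ioo a b)) :
    ∀ k ∈ Finset.Icc 1 n, ∀ y : ℝ → ℝ, ContDiffOn ℝ (⊤ : ℕ∞) y (Ioo a b) →
      ∀ z ∈ Ioo a b,
        secondOrderOp p (qCoeff p q₀ bf k) (rCoeff p q₀ r₀ bf υ k) y z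
          = sGauge bf k z
            * secondOrderOp p (qTilde p q₀ k) (rTilde p q₀ r₀ υ k)
                (fun x => y x / sGauge bf k x) z := by
  intro k hk y hy z hz
  have hsub : ∀ j ∈ Finset.Icc 1 k, j ∈ Finset.Icc 1 n := fun j hj =>
    Finset.Icc_subset_Icc_right (Finset.mem_Icc.1 hk).2 hj
  have diff {f : ℝ → ℝ} (hf : ContDiffOn ℝ (⊤ : ℕ∞) f (Ioo a b)) :
      DifferentiableOn ℝ f (Ioo a b) := hf.differentiableOn (by simp)
  have diff' {f : ℝ → ℝ} (hf : ContDiffOn ℝ (⊤ : ℕ∞) f (Ioo a b)) :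
      DifferentiableOn ℝ (deriv f) (Ioo a b) :=
    (hf.deriv_of_isOpen (m := 1) isOpen_Ioo (by norm_cast)).differentiableOn
      one_ne_zero
  have hbd : ∀ x ∈ Ioo a b, ∀ j ∈ Finset.Icc 1 k, DifferentiableAt ℝ (bf j) x :=
    fun x hx j hj => (diff (hb j (hsub j hj))).differentiableAt (isOpen_Ioo.mem_nhds hx)
  have hbd' : ∀ x ∈ Ioo a b, ∀ j ∈ Finset.Icc 1 k, DifferentiableAt ℝ (deriv (bf j)) x :=
    fun x hx j hj => (diff' (hb j (hsub j hj))).differentiableAt (isOpen_Ioo.mem_nhds hx)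
  have hne : ∀ x ∈ Ioo a b, ∀ j ∈ Finset.Icc 1 k, bf j x ≠ 0 :=
    fun x hx j hj => hb0 j (hsub j hj) x hx
  rw [mul_secondOrderOp_div isOpen_Ioo p _ _
    (fun x hx => hasDerivAt_sGauge (hbd x hx) (hne x hx))
    (fun x hx => Finset.prod_ne_zero_iff.2 (hne x hx))
    (fun x hx => (differentiableAt_sigmaGauge (hbd x hx) (hbd' x hx)
      (hne x hx)).differentiableWithinAt)
    (diff hy) (diff' hy) hz]
  simp only [secondOrderOp, qCoeff, rCoeff, qTilde, rTilde]
  ring
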